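/- Let H be a Hopf monoid in a braided monoidal category C (not assumed symmetric), and let (δ, σ) be a braided modular pair in involution for H. Then τ₂ ∘ σ₁ = σ₀ ∘ τ₃ as morphisms H ⊗ H ⊗ H → H ⊗ H, where σ₀ := (ε ⊗ 1_{H⊗H}) and σ₁ := (1_H ⊗ ε ⊗ 1_H) (composed with the evident unitors). -/

import Mathlib

open CategoryTheory hiding HopfObj
open MonoidalCategory

universe v u

/-- A Hopf algebra object (a "braided Hopf algebra") in a braided monoidal category `C`,
consisting of an object `X` with multiplication `mul`, unit `one`, comultiplication
`comul`, counit `counit` and antipode `antipode`, satisfying the usual axioms, with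
the compatibility of `mul` and `comul` expressed via the braiding. -/
structure HopfObj (C : Type u) [Category.{v} C] [MonoidalCategory C]
    [BraidedCategory C] where
  X : C
  mul : X ⊗ X ⟶ X
  one : 𝟙_ C ⟶ X
  comul : X ⟶ X ⊗ X
  counit : X ⟶ 𝟙_ C
  antipode : X ⟶ X
  mul_assoc : (mul ▷ X) ≫ mul = (α_ X X X).hom ≫ (X ◁ mul) ≫ mul
  one_mul : (one ▷ X) ≫ mul = (λ_ X).hom
  mul_one : (X ◁ one) ≫ mul = (ρ_ X).hom
  comul_assoc : comul ≫ (comul ▷ X) ≫ (α_ X X X).hom = comul ≫ (X ◁ comul)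
  counit_comul : comul ≫ (counit ▷ X) = (λ_ X).inv
  comul_counit : comul ≫ (X ◁ counit) = (ρ_ X).inv
  mul_comul : mul ≫ comul =
      (comul ⊗ₘ comul) ≫ (α_ X X (X ⊗ X)).hom ≫ (X ◁ (α_ X X X).inv) ≫
        (X ◁ ((β_ X X).hom ▷ X)) ≫ (X ◁ (α_ X X X).hom) ≫
        (α_ X X (X ⊗ X)).inv ≫ (mul ⊗ₘ mul)
  one_comul : one ≫ comul = (λ_ (𝟙_ C)).inv ≫ (one ⊗ₘ one)
  mul_counit : mul ≫ counit = (counit ⊗ₘ counit) ≫ (λ_ (𝟙_ C)).hom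
  one_counit : one ≫ counit = 𝟙 (𝟙_ C)
  antipode_left : comul ≫ (antipode ▷ X) ≫ mul = counit ≫ one
  antipode_right : comul ≫ (X ◁ antipode) ≫ mul = counit ≫ one

variable {C : Type u} [Category.{v} C] [MonoidalCategory C] [BraidedCategory C]

/-- The `δ`-twisted antipode `S̃ = λ_H ∘ (δ ⊗ S) ∘ Δ`. -/
def HopfObj.twist (A : HopfObj C) (δ : A.X ⟶ 𝟙_ C) : A.X ⟶ A.X :=
  A.comul ≫ (δ ⊗ₘ A.antipode) ≫ (λ_ A.X).hom

/-- `δ : H ⟶ 𝟙` is a character, i.e. a morphism of monoid objects. -/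
def HopfObj.IsCharacter (A : HopfObj C) (δ : A.X ⟶ 𝟙_ C) : Prop :=
  A.mul ≫ δ = (δ ⊗ₘ δ) ≫ (λ_ (𝟙_ C)).hom ∧ A.one ≫ δ = 𝟙 (𝟙_ C)

/-- `σ : 𝟙 ⟶ H` is a cocharacter, i.e. a morphism of comonoid objects. -/
def HopfObj.IsCocharacter (A : HopfObj C) (σ : 𝟙_ C ⟶ A.X) : Prop :=
  σ ≫ A.comul = (λ_ (𝟙_ C)).inv ≫ (σ ⊗ₘ σ) ∧ σ ≫ A.counit = 𝟙 (𝟙_ C)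

/-- The morphism `m ∘ (m ⊗ 1_H) ∘ ((S ∘ σ) ⊗ (S̃ ∘ S̃) ⊗ σ) : H ⟶ H`
(with unitors inserted). -/
def HopfObj.bmpiMap (A : HopfObj C) (δ : A.X ⟶ 𝟙_ C) (σ : 𝟙_ C ⟶ A.X) :
    A.X ⟶ A.X :=
  (λ_ A.X).inv ≫ ((σ ≫ A.antipode) ⊗ₘ (A.twist δ ≫ A.twist δ)) ≫
    (ρ_ (A.X ⊗ A.X)).inv ≫ ((A.X ⊗ A.X) ◁ σ) ≫ (A.mul ▷ A.X) ≫ A.mul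

/-- `(δ, σ)` is a braided modular pair in involution. -/
def HopfObj.IsBMPI (A : HopfObj C) (δ : A.X ⟶ 𝟙_ C) (σ : 𝟙_ C ⟶ A.X) : Prop :=
  σ ≫ δ = 𝟙 (𝟙_ C) ∧ A.bmpiMap δ σ = 𝟙 A.X

/-- The cyclic operator `τ₂ = (m ⊗ m) ∘ (1_H ⊗ ψ ⊗ 1_H) ∘ ((Δ ∘ S̃) ⊗ 1_H ⊗ σ)`,
with the `σ`-factor inserted via `H ⊗ H ≅ (H ⊗ H) ⊗ 𝟙`. -/
def HopfObj.tau2 (A : HopfObj C) (δ : A.X ⟶ 𝟙_ C) (σ : 𝟙_ C ⟶ A.X) :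
    A.X ⊗ A.X ⟶ A.X ⊗ A.X :=
  (ρ_ (A.X ⊗ A.X)).inv ≫ (((A.twist δ ≫ A.comul) ⊗ₘ 𝟙 A.X) ⊗ₘ σ) ≫
    (((α_ A.X A.X A.X).hom ≫ (A.X ◁ (β_ A.X A.X).hom) ≫ (α_ A.X A.X A.X).inv) ▷ A.X) ≫
    (α_ (A.X ⊗ A.X) A.X A.X).hom ≫ (A.mul ⊗ₘ A.mul)

/-- `Δ² = (1_H ⊗ Δ) ∘ Δ`. -/
def HopfObj.comul2 (A : HopfObj C) : A.X ⟶ A.X ⊗ (A.X ⊗ A.X) :=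
  A.comul ≫ (A.X ◁ A.comul)

/-- `m₃`, the multiplication of the threefold braided tensor product algebra:
`(m ⊗ m ⊗ m) ∘ (1_H ⊗ ψ ⊗ 1_{H⊗H⊗H}) ∘ (1_{H⊗H⊗H} ⊗ ψ ⊗ 1_H) ∘ (1_{H⊗H} ⊗ ψ ⊗ 1_{H⊗H})`
(with associators inserted). -/
def HopfObj.mul3 (A : HopfObj C) :
    (A.X ⊗ (A.X ⊗ A.X)) ⊗ (A.X ⊗ (A.X ⊗ A.X)) ⟶ A.X ⊗ (A.X ⊗ A.X) :=
  (α_ A.X (A.X ⊗ A.X) (A.X ⊗ (A.X ⊗ A.X))).hom ≫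
  (A.X ◁ (α_ A.X A.X (A.X ⊗ (A.X ⊗ A.X))).hom) ≫
  (A.X ◁ (A.X ◁ ((α_ A.X A.X (A.X ⊗ A.X)).inv ≫
    ((β_ A.X A.X).hom ▷ (A.X ⊗ A.X)) ≫ (α_ A.X A.X (A.X ⊗ A.X)).hom))) ≫
  (A.X ◁ (A.X ◁ (A.X ◁ ((α_ A.X A.X A.X).inv ≫
    ((β_ A.X A.X).hom ▷ A.X) ≫ (α_ A.X A.X A.X).hom)))) ≫
  (A.X ◁ ((α_ A.X A.X (A.X ⊗ (A.X ⊗ A.X))).inv ≫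
    ((β_ A.X A.X).hom ▷ (A.X ⊗ (A.X ⊗ A.X))) ≫
    (α_ A.X A.X (A.X ⊗ (A.X ⊗ A.X))).hom)) ≫
  (A.X ◁ (A.X ◁ (α_ A.X A.X (A.X ⊗ A.X)).inv)) ≫
  (α_ A.X A.X ((A.X ⊗ A.X) ⊗ (A.X ⊗ A.X))).inv ≫
  (A.mul ⊗ₘ (A.mul ⊗ₘ A.mul))

/-- The cyclic operator `τ₃ = m₃ ∘ ((Δ² ∘ S̃) ⊗ 1_{H⊗H} ⊗ σ)`, with the `σ`-factor
inserted via `H^{⊗3} ≅ H^{⊗3} ⊗ 𝟙`. -/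
def HopfObj.tau3 (A : HopfObj C) (δ : A.X ⟶ 𝟙_ C) (σ : 𝟙_ C ⟶ A.X) :
    A.X ⊗ (A.X ⊗ A.X) ⟶ A.X ⊗ (A.X ⊗ A.X) :=
  ((A.twist δ ≫ A.comul2) ⊗ₘ (A.X ◁ ((ρ_ A.X).inv ≫ (A.X ◁ σ)))) ≫ A.mul3

/-- Codegeneracy `σ₀ = ε ⊗ 1_{H⊗H}` (composed with the evident unitor). -/
def HopfObj.deg0 (A : HopfObj C) : A.X ⊗ (A.X ⊗ A.X) ⟶ A.X ⊗ A.X :=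
  (A.counit ▷ (A.X ⊗ A.X)) ≫ (λ_ (A.X ⊗ A.X)).hom

/-- Codegeneracy `σ₁ = 1_H ⊗ ε ⊗ 1_H` (composed with the evident unitor). -/
def HopfObj.deg1 (A : HopfObj C) : A.X ⊗ (A.X ⊗ A.X) ⟶ A.X ⊗ A.X :=
  A.X ◁ ((A.counit ▷ A.X) ≫ (λ_ A.X).hom)

/-- Codegeneracy `σ₂ = 1_{H⊗H} ⊗ ε` (composed with the evident unitor). -/
def HopfObj.deg2 (A : HopfObj C) : A.X ⊗ (A.X ⊗ A.X) ⟶ A.X ⊗ A.X :=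
  A.X ◁ ((A.X ◁ A.counit) ≫ (ρ_ A.X).hom)

theorem HopfObj.aux_k (A : HopfObj C) (Z : C) :
    (α_ A.X A.X Z).inv ≫ (β_ A.X A.X).hom ▷ Z ≫ (α_ A.X A.X Z).hom ≫
      A.counit ▷ (A.X ⊗ Z) ≫ (λ_ (A.X ⊗ Z)).hom = A.X ◁ (A.counit ▷ Z ≫ (λ_ Z).hom) := by
  have h : (β_ A.X A.X).hom ≫ A.counit ▷ A.X = A.X ◁ A.counit ≫ (ρ_ A.X).hom ≫ (λ_ A.X).inv := by
    rw [← BraidedCategory.braiding_naturality_right, braiding_tensorUnit_right]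
  have h2 : (α_ A.X A.X Z).inv ≫ (β_ A.X A.X).hom ▷ Z ≫ (α_ A.X A.X Z).hom ≫
      A.counit ▷ (A.X ⊗ Z) ≫ (λ_ (A.X ⊗ Z)).hom =
      (α_ A.X A.X Z).inv ≫ ((β_ A.X A.X).hom ≫ A.counit ▷ A.X) ▷ Z ≫
        (α_ (𝟙_ C) A.X Z).hom ≫ (λ_ (A.X ⊗ Z)).hom := by
    simp only [comp_whiskerRight, Category.assoc, whiskerRight_tensor, Iso.hom_inv_id_assoc,
      Iso.inv_hom_id, Iso.inv_hom_id_assoc, Category.comp_id]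
  rw [h2, h]
  monoidal

theorem HopfObj.aux_push (A : HopfObj C) {Y Z : C} (f : Y ⟶ Z) :
    A.X ◁ f ≫ A.counit ▷ Z ≫ (λ_ Z).hom = A.counit ▷ Y ≫ (λ_ Y).hom ≫ f := by
  rw [whisker_exchange_assoc, leftUnitor_naturality]

theorem HopfObj.aux_mul3 (A : HopfObj C) :
    A.mul3 ≫ A.deg0 =
      (A.deg0 ⊗ₘ A.deg0) ≫ (α_ A.X A.X (A.X ⊗ A.X)).hom ≫
        A.X ◁ ((α_ A.X A.X A.X).inv ≫ (β_ A.X A.X).hom ▷ A.X ≫ (α_ A.X A.X A.X).hom) ≫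
        (α_ A.X A.X (A.X ⊗ A.X)).inv ≫ (A.mul ⊗ₘ A.mul) := by
  have e : (A.mul ⊗ₘ (A.mul ⊗ₘ A.mul)) ≫ A.deg0 =
      (α_ A.X A.X _).hom ≫ A.X ◁ (A.counit ▷ _ ≫ (λ_ _).hom) ≫ A.counit ▷ _ ≫ (λ_ _).hom ≫
        (A.mul ⊗ₘ A.mul) := by
    have : (A.mul ⊗ₘ (A.mul ⊗ₘ A.mul)) ≫ A.deg0 =
        (A.mul ≫ A.counit) ▷ _ ≫ (λ_ _).hom ≫ (A.mul ⊗ₘ A.mul) := by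
      rw [HopfObj.deg0, MonoidalCategory.tensorHom_def, Category.assoc, whisker_exchange_assoc,
        leftUnitor_naturality, comp_whiskerRight, Category.assoc]
    rw [this, A.mul_counit, MonoidalCategory.tensorHom_def']
    monoidal
  rw [HopfObj.mul3]
  simp only [Category.assoc]
  rw [e]
  set b := (α_ A.X A.X A.X).inv ≫ (β_ A.X A.X).hom ▷ A.X ≫ (α_ A.X A.X A.X).hom with hb
  have e1 : A.X ◁ ((α_ A.X A.X (A.X ⊗ (A.X ⊗ A.X))).inv ≫
    ((β_ A.X A.X).hom ▷ (A.X ⊗ (A.X ⊗ A.X))) ≫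
    (α_ A.X A.X (A.X ⊗ (A.X ⊗ A.X))).hom) ≫
    (A.X ◁ (A.X ◁ (α_ A.X A.X (A.X ⊗ A.X)).inv)) ≫
    (α_ A.X A.X ((A.X ⊗ A.X) ⊗ (A.X ⊗ A.X))).inv ≫
    (α_ A.X A.X _).hom ≫ A.X ◁ (A.counit ▷ _ ≫ (λ_ _).hom) =
    A.X ◁ A.X ◁ (A.counit ▷ _ ≫ (λ_ _).hom) ≫ A.X ◁ (α_ A.X A.X (A.X ⊗ A.X)).inv := by
    rw [Iso.inv_hom_id_assoc]
    simp only [← whiskerLeft_comp]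
    congr 1
    rw [A.aux_push, ← A.aux_k]
    simp only [Category.assoc]
  have e2 : A.X ◁ A.X ◁ A.X ◁ b ≫ A.X ◁ A.X ◁ (A.counit ▷ _ ≫ (λ_ _).hom) =
      A.X ◁ A.X ◁ (A.counit ▷ _ ≫ (λ_ _).hom) ≫ A.X ◁ A.X ◁ b := by
    simp only [← whiskerLeft_comp]
    rw [A.aux_push, Category.assoc]
  have e3 : A.X ◁ A.X ◁ ((α_ A.X A.X (A.X ⊗ A.X)).inv ≫
    ((β_ A.X A.X).hom ▷ (A.X ⊗ A.X)) ≫ (α_ A.X A.X (A.X ⊗ A.X)).hom) ≫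
    A.X ◁ A.X ◁ (A.counit ▷ _ ≫ (λ_ _).hom) =
      A.X ◁ A.X ◁ A.X ◁ (A.counit ▷ _ ≫ (λ_ _).hom) := by
    simp only [← whiskerLeft_comp]
    rw [← A.aux_k]
    simp only [Category.assoc]
  have e1' := fun {W : C} (g : _ ⟶ W) => congrArg (· ≫ g) e1
  have e2' := fun {W : C} (g : _ ⟶ W) => congrArg (· ≫ g) e2
  have e3' := fun {W : C} (g : _ ⟶ W) => congrArg (· ≫ g) e3
  simp only [Category.assoc] at e1' e2' e3'
  rw [e1', e2', e3']
  have e4 : (A.deg0 ⊗ₘ A.deg0) = (α_ A.X (A.X ⊗ A.X) (A.X ⊗ (A.X ⊗ A.X))).hom ≫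
      A.counit ▷ _ ≫ (λ_ _).hom ≫ (α_ A.X A.X (A.X ⊗ (A.X ⊗ A.X))).hom ≫
      A.X ◁ A.X ◁ (A.counit ▷ _ ≫ (λ_ _).hom) ≫ (α_ A.X A.X (A.X ⊗ A.X)).inv := by
    rw [MonoidalCategory.tensorHom_def]
    simp only [HopfObj.deg0]
    monoidal
  have p := fun {Y Z W : C} (f : Y ⟶ Z) (g : Z ⟶ W) => congrArg (· ≫ g) (A.aux_push f)
  simp only [Category.assoc] at p
  rw [e4, p, p, p, p]
  simp only [Category.assoc, Iso.inv_hom_id_assoc]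

/-- `τ₂ ∘ σ₁ = σ₀ ∘ τ₃` as morphisms `H ⊗ H ⊗ H ⟶ H ⊗ H`. -/
theorem HopfObj.tau2_deg1 (A : HopfObj C) (δ : A.X ⟶ 𝟙_ C) (σ : 𝟙_ C ⟶ A.X)
    (hδ : A.IsCharacter δ) (hσ : A.IsCocharacter σ) (hbmpi : A.IsBMPI δ σ) :
    A.deg1 ≫ A.tau2 δ σ = A.tau3 δ σ ≫ A.deg0 := by
  have h1 : A.comul2 ≫ A.deg0 = A.comul := by
    rw [HopfObj.comul2, HopfObj.deg0, Category.assoc, A.aux_push, ← Category.assoc,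
      A.counit_comul, Iso.inv_hom_id_assoc]
  have h2 : (A.X ◁ ((ρ_ A.X).inv ≫ (A.X ◁ σ))) ≫ A.deg0 =
      (A.counit ▷ A.X ≫ (λ_ A.X).hom) ≫ (ρ_ A.X).inv ≫ A.X ◁ σ := by
    rw [HopfObj.deg0, A.aux_push, Category.assoc]
  have h3 : A.tau3 δ σ ≫ A.deg0 = A.deg1 ≫ ((A.twist δ ≫ A.comul) ⊗ₘ ((ρ_ A.X).inv ≫ A.X ◁ σ)) ≫
        (α_ A.X A.X (A.X ⊗ A.X)).hom ≫
        A.X ◁ ((α_ A.X A.X A.X).inv ≫ (β_ A.X A.X).hom ▷ A.X ≫ (α_ A.X A.X A.X).hom) ≫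
        (α_ A.X A.X (A.X ⊗ A.X)).inv ≫ (A.mul ⊗ₘ A.mul) := by
    rw [HopfObj.tau3, Category.assoc, A.aux_mul3, MonoidalCategory.tensorHom_comp_tensorHom_assoc,
      Category.assoc, h1, h2, HopfObj.deg1,
      ← id_tensorHom A.X (A.counit ▷ A.X ≫ (λ_ A.X).hom),
      MonoidalCategory.tensorHom_comp_tensorHom_assoc, Category.id_comp]
  rw [h3, HopfObj.tau2]
  congr 1
  have h4 : (ρ_ (A.X ⊗ A.X)).inv ≫ (((A.twist δ ≫ A.comul) ⊗ₘ 𝟙 A.X) ⊗ₘ σ) =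
      ((A.twist δ ≫ A.comul) ⊗ₘ ((ρ_ A.X).inv ≫ A.X ◁ σ)) ≫ (α_ (A.X ⊗ A.X) A.X A.X).inv := by
    generalize A.twist δ ≫ A.comul = t
    rw [MonoidalCategory.tensorHom_def t ((ρ_ A.X).inv ≫ A.X ◁ σ),
      MonoidalCategory.tensorHom_def (t ⊗ₘ 𝟙 A.X) σ, tensorHom_id]
    monoidal
  rw [← Category.assoc, h4]
  simp only [Category.assoc]
  congr 1
  monoidal
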